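/- Let k ≥ 1, γ > 0, and λ ∈ (0,1) with 2kλ^γ ≤ 1/2. Then for every integer D ≥ 0, ∑_{σ} λ^{γ·deg(σ)} ≤ 4·(2kλ^γ)^D, where the sum runs over all permutations σ of {1,…,k} with deg(σ) ≥ D. -/

import Mathlib

/-- The extension `σ̃` of a permutation `σ` of `{1,…,k}` to `{0,1,…,k+1}`, with
`σ̃(0) = 0` and `σ̃(k+1) = k+1`.  Here `σ : Equiv.Perm (Fin k)` acts on `{0,…,k-1}`,
shifted by one. -/
def sigmaTilde (k : ℕ) (σ : Equiv.Perm (Fin k)) (j : ℕ) : ℕ :=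
  if h : 1 ≤ j ∧ j ≤ k then ((σ ⟨j - 1, by omega⟩ : Fin k) : ℕ) + 1 else j

/-- The point `(j, σ(j))` is a *peak*: `σ(j) < min {σ̃(j-1), σ̃(j+1)}`. -/
def IsPeakAt (k : ℕ) (σ : Equiv.Perm (Fin k)) (j : ℕ) : Prop :=
  sigmaTilde k σ j < min (sigmaTilde k σ (j - 1)) (sigmaTilde k σ (j + 1))

/-- The point `(j, σ(j))` is a *valley*: `σ(j) > max {σ̃(j-1), σ̃(j+1)}`. -/
def IsValleyAt (k : ℕ) (σ : Equiv.Perm (Fin k)) (j : ℕ) : Prop :=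
  max (sigmaTilde k σ (j - 1)) (sigmaTilde k σ (j + 1)) < sigmaTilde k σ j

/-- The point `(j, σ(j))` is a *ladder*: `σ(j) - 1 ∈ {σ̃(j-1), σ̃(j+1)}` and the point is
not a valley. -/
def IsLadderAt (k : ℕ) (σ : Equiv.Perm (Fin k)) (j : ℕ) : Prop :=
  (sigmaTilde k σ j - 1 = sigmaTilde k σ (j - 1) ∨
    sigmaTilde k σ j - 1 = sigmaTilde k σ (j + 1)) ∧ ¬IsValleyAt k σ j

instance (k : ℕ) (σ : Equiv.Perm (Fin k)) (j : ℕ) : Decidable (IsPeakAt k σ j) := by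
  unfold IsPeakAt; infer_instance

instance (k : ℕ) (σ : Equiv.Perm (Fin k)) (j : ℕ) : Decidable (IsValleyAt k σ j) := by
  unfold IsValleyAt; infer_instance

instance (k : ℕ) (σ : Equiv.Perm (Fin k)) (j : ℕ) : Decidable (IsLadderAt k σ j) := by
  unfold IsLadderAt; infer_instance

/-- `ℓ(σ)`: the number of `j ∈ {1,…,k}` such that `(j, σ(j))` is a ladder. -/
def ladderCount (k : ℕ) (σ : Equiv.Perm (Fin k)) : ℕ :=
  ((Finset.Icc 1 k).filter fun j => IsLadderAt k σ j).card

/-- The degree of a permutation: `deg(σ) := k - ℓ(σ)`. -/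
def permDegree (k : ℕ) (σ : Equiv.Perm (Fin k)) : ℕ := k - ladderCount k σ

lemma sigmaTilde_inv_apply (k : ℕ) (σ : Equiv.Perm (Fin k)) (j : ℕ) :
    sigmaTilde k σ⁻¹ (sigmaTilde k σ j) = j := by
  by_cases h : 1 ≤ j ∧ j ≤ k
  · have h' := (σ ⟨j - 1, by omega⟩).isLt
    have hs : sigmaTilde k σ j = (σ ⟨j - 1, by omega⟩ : Fin k) + 1 := dif_pos h
    rw [hs, sigmaTilde, dif_pos ⟨by omega, by omega⟩]
    simp
    omega
  · rw [sigmaTilde, sigmaTilde]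
    simp [h]

lemma sigmaTilde_apply_inv (k : ℕ) (σ : Equiv.Perm (Fin k)) (v : ℕ) :
    sigmaTilde k σ (sigmaTilde k σ⁻¹ v) = v := by
  simpa using sigmaTilde_inv_apply k σ⁻¹ v

lemma sigmaTilde_injective (k : ℕ) (σ : Equiv.Perm (Fin k)) :
    Function.Injective (sigmaTilde k σ) :=
  Function.LeftInverse.injective (sigmaTilde_inv_apply k σ)

lemma sigmaTilde_mem_Icc {k : ℕ} (σ : Equiv.Perm (Fin k)) {j : ℕ} (hj : 1 ≤ j ∧ j ≤ k) :
    1 ≤ sigmaTilde k σ j ∧ sigmaTilde k σ j ≤ k := by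
  rw [sigmaTilde, dif_pos hj]
  have := (σ ⟨j - 1, by omega⟩).isLt
  omega

lemma sigmaTilde_of_not_mem {k : ℕ} (σ : Equiv.Perm (Fin k)) {j : ℕ} (hj : ¬(1 ≤ j ∧ j ≤ k)) :
    sigmaTilde k σ j = j :=
  dif_neg hj

/-- The value `v` is a *break* of `σ` if the point of height `v` is not a ladder. -/
def IsBreak (k : ℕ) (σ : Equiv.Perm (Fin k)) (v : ℕ) : Prop :=
  (1 ≤ v ∧ v ≤ k) ∧ ¬IsLadderAt k σ (sigmaTilde k σ⁻¹ v)

instance (k : ℕ) (σ : Equiv.Perm (Fin k)) : DecidablePred (IsBreak k σ) := fun v => by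
  unfold IsBreak; infer_instance

lemma isBreak_finite (k : ℕ) (σ : Equiv.Perm (Fin k)) : (Set.ofPred (IsBreak k σ)).Finite :=
  (Set.finite_Icc 1 k).subset fun _ h => h.1

lemma card_isBreak (k : ℕ) (σ : Equiv.Perm (Fin k)) :
    (isBreak_finite k σ).toFinset.card = permDegree k σ := by
  have hcount := Finset.card_filter_add_card_filter_not (s := Finset.Icc 1 k)
    (fun j => IsLadderAt k σ j)
  have hbij : (isBreak_finite k σ).toFinset.card =
      ((Finset.Icc 1 k).filter fun j => ¬IsLadderAt k σ j).card := by
    refine Finset.card_bij' (fun v _ => sigmaTilde k σ⁻¹ v) (fun j _ => sigmaTilde k σ j)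
      ?_ ?_ ?_ ?_
    · intro v hv
      simp only [Set.Finite.mem_toFinset, Set.mem_ofPred_eq] at hv
      simpa using ⟨sigmaTilde_mem_Icc σ⁻¹ hv.1, hv.2⟩
    · intro j hj
      simp only [Finset.mem_filter, Finset.mem_Icc] at hj
      simp only [Set.Finite.mem_toFinset, Set.mem_ofPred_eq]
      refine ⟨sigmaTilde_mem_Icc σ hj.1, ?_⟩
      rw [sigmaTilde_inv_apply]
      exact hj.2
    · intro v _
      exact sigmaTilde_apply_inv k σ v
    · intro j _
      exact sigmaTilde_inv_apply k σ j
  rw [Nat.card_Icc] at hcount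
  rw [hbij, permDegree, ladderCount]
  omega

/-- A non-break occupies a position next to the position of the preceding value. -/
lemma adjacent_of_not_isBreak {k : ℕ} {σ : Equiv.Perm (Fin k)} {v : ℕ} (hv : v + 1 ≤ k)
    (h : ¬IsBreak k σ (v + 1)) :
    sigmaTilde k σ⁻¹ (v + 1) = sigmaTilde k σ⁻¹ v + 1 ∨
      sigmaTilde k σ⁻¹ (v + 1) + 1 = sigmaTilde k σ⁻¹ v := by
  have hlad : IsLadderAt k σ (sigmaTilde k σ⁻¹ (v + 1)) := by
    by_contra hl
    exact h ⟨⟨by omega, hv⟩, hl⟩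
  have hpos := (sigmaTilde_mem_Icc σ⁻¹ (j := v + 1) ⟨by omega, hv⟩).1
  have hadj := hlad.1
  rw [sigmaTilde_apply_inv, Nat.add_sub_cancel] at hadj
  rcases hadj with h1 | h1
  · have := congrArg (sigmaTilde k σ⁻¹) h1
    rw [sigmaTilde_inv_apply] at this
    omega
  · have := congrArg (sigmaTilde k σ⁻¹) h1
    rw [sigmaTilde_inv_apply] at this
    omega

/-- If `v + 1` is a break, then every value larger than `v` located next to `v` is a break. -/
lemma isBreak_of_adjacent {k : ℕ} {σ : Equiv.Perm (Fin k)} {v q : ℕ}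
    (h : IsBreak k σ (v + 1)) (hq : 1 ≤ q ∧ q ≤ k)
    (hadj : q = sigmaTilde k σ⁻¹ v + 1 ∨ q + 1 = sigmaTilde k σ⁻¹ v)
    (hlt : v < sigmaTilde k σ q) : IsBreak k σ (sigmaTilde k σ q) := by
  refine ⟨sigmaTilde_mem_Icc σ hq, ?_⟩
  rw [sigmaTilde_inv_apply]
  intro hlad
  have hne : sigmaTilde k σ q ≠ v + 1 := by
    intro heq
    apply h.2
    rwa [← heq, sigmaTilde_inv_apply]
  obtain ⟨hl, hval⟩ := hlad
  apply hval
  rw [IsValleyAt, max_lt_iff]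
  rcases hadj with hadj | hadj
  · have hs : sigmaTilde k σ (q - 1) = v := by
      rw [hadj, Nat.add_sub_cancel, sigmaTilde_apply_inv]
    omega
  · have hs : sigmaTilde k σ (q + 1) = v := by
      rw [hadj, sigmaTilde_apply_inv]
    omega

/-- The code of `σ`: for the `i`-th break, its position and whether the next value is placed
immediately to its right. -/
noncomputable def breakCode (k : ℕ) (σ : Equiv.Perm (Fin k)) (i : ℕ) : ℕ × Bool :=
  (sigmaTilde k σ⁻¹ (Nat.nth (IsBreak k σ) i),
    decide (sigmaTilde k σ⁻¹ (Nat.nth (IsBreak k σ) i + 1) =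
      sigmaTilde k σ⁻¹ (Nat.nth (IsBreak k σ) i) + 1))

lemma isBreak_nth {k : ℕ} (σ : Equiv.Perm (Fin k)) {i : ℕ} (hi : i < permDegree k σ) :
    IsBreak k σ (Nat.nth (IsBreak k σ) i) :=
  Nat.nth_mem_of_lt_card (isBreak_finite k σ) (by rwa [card_isBreak])

lemma count_isBreak_lt {k : ℕ} {σ : Equiv.Perm (Fin k)} {v : ℕ} (hv : IsBreak k σ v) :
    Nat.count (IsBreak k σ) v < permDegree k σ := by
  rw [← card_isBreak]
  exact Nat.count_lt_card (isBreak_finite k σ) hv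

lemma breakCode_count {k : ℕ} {σ : Equiv.Perm (Fin k)} {v : ℕ} (hv : IsBreak k σ v) :
    breakCode k σ (Nat.count (IsBreak k σ) v) =
      (sigmaTilde k σ⁻¹ v, decide (sigmaTilde k σ⁻¹ (v + 1) = sigmaTilde k σ⁻¹ v + 1)) := by
  rw [breakCode, Nat.nth_count hv]

section Injectivity

variable {k : ℕ} {σ τ : Equiv.Perm (Fin k)}

/-- If two permutations have the same code and agree on all values up to `v`, then `v + 1` is a
break of the second whenever it is a break of the first. -/
lemma isBreak_succ_of_agree (hdeg : permDegree k σ = permDegree k τ)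
    (hcode : ∀ i < permDegree k σ, breakCode k σ i = breakCode k τ i) {v : ℕ}
    (hagree : ∀ u ≤ v, sigmaTilde k σ⁻¹ u = sigmaTilde k τ⁻¹ u)
    (h : IsBreak k σ (v + 1)) : IsBreak k τ (v + 1) := by
  by_contra hτ
  have hv : 1 ≤ v + 1 ∧ v + 1 ≤ k := h.1
  have hq := sigmaTilde_mem_Icc τ⁻¹ hv
  have hadj := adjacent_of_not_isBreak hv.2 hτ
  rw [← hagree v le_rfl] at hadj
  have hlt : v < sigmaTilde k σ (sigmaTilde k τ⁻¹ (v + 1)) := by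
    by_contra hle
    have heq := hagree _ (not_lt.mp hle)
    rw [sigmaTilde_inv_apply] at heq
    have := sigmaTilde_injective k τ⁻¹ heq
    omega
  have hb := isBreak_of_adjacent h hq hadj hlt
  have hi := count_isBreak_lt hb
  have hc := congrArg Prod.fst (hcode _ hi)
  rw [breakCode_count hb] at hc
  simp only [sigmaTilde_inv_apply, breakCode] at hc
  apply hτ
  rw [sigmaTilde_injective k τ⁻¹ hc]
  exact isBreak_nth τ (hdeg ▸ hi)

lemma eq_of_breakCode_eq (hdeg : permDegree k σ = permDegree k τ)
    (hcode : ∀ i < permDegree k σ, breakCode k σ i = breakCode k τ i) : σ = τ := by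
  have key : ∀ v ≤ k, ∀ u ≤ v, sigmaTilde k σ⁻¹ u = sigmaTilde k τ⁻¹ u ∧
      (IsBreak k σ u ↔ IsBreak k τ u) := by
    intro v
    induction v with
    | zero =>
      intro _ u hu
      have hu0 : ¬(1 ≤ u ∧ u ≤ k) := by omega
      rw [sigmaTilde_of_not_mem _ hu0, sigmaTilde_of_not_mem _ hu0]
      exact ⟨rfl, fun h => absurd h.1 hu0, fun h => absurd h.1 hu0⟩
    | succ v ih =>
      intro hv u hu
      have ih := ih (by omega)
      rcases Nat.lt_or_ge v u with hvu | hvu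
      swap
      · exact ih u hvu
      obtain rfl : u = v + 1 := by omega
      have hcount : ∀ w ≤ v + 1,
          Nat.count (IsBreak k σ) w = Nat.count (IsBreak k τ) w := by
        intro w hw
        simp only [Nat.count_eq_card_filter_range]
        congr 1
        refine Finset.filter_congr fun x hx => (ih x ?_).2
        have := Finset.mem_range.mp hx
        omega
      have hiff : IsBreak k σ (v + 1) ↔ IsBreak k τ (v + 1) :=
        ⟨isBreak_succ_of_agree hdeg hcode fun u hu => (ih u hu).1,
          isBreak_succ_of_agree hdeg.symm (fun i hi => (hcode i (hdeg ▸ hi)).symm)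
            fun u hu => (ih u hu).1.symm⟩
      refine ⟨?_, hiff⟩
      have hcode_at : ∀ w ≤ v + 1, IsBreak k σ w → IsBreak k τ w →
          (sigmaTilde k σ⁻¹ w, decide (sigmaTilde k σ⁻¹ (w + 1) = sigmaTilde k σ⁻¹ w + 1)) =
          (sigmaTilde k τ⁻¹ w, decide (sigmaTilde k τ⁻¹ (w + 1) = sigmaTilde k τ⁻¹ w + 1)) := by
        intro w hw h1 h2
        rw [← breakCode_count h1, ← breakCode_count h2, ← hcount w hw]
        exact hcode _ (count_isBreak_lt h1)
      by_cases hb : IsBreak k σ (v + 1)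
      · exact congrArg Prod.fst (hcode_at _ le_rfl hb (hiff.mp hb))
      have hσ := adjacent_of_not_isBreak hv hb
      have hτ := adjacent_of_not_isBreak hv (mt hiff.mpr hb)
      have hpos := (ih v le_rfl).1
      by_cases hbv : IsBreak k σ v
      · have hdir := congrArg Prod.snd (hcode_at v (by omega) hbv ((ih v le_rfl).2.mp hbv))
        simp only [decide_eq_decide] at hdir
        omega
      · rcases v with _ | v
        · have h0 : sigmaTilde k σ⁻¹ 0 = 0 := sigmaTilde_of_not_mem _ (by omega)
          omega
        · have hσ' := adjacent_of_not_isBreak (by omega) hbv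
          have hprev := (ih v (by omega)).1
          have hσne := (sigmaTilde_injective k σ⁻¹).ne (show v + 1 + 1 ≠ v by omega)
          have hτne := (sigmaTilde_injective k τ⁻¹).ne (show v + 1 + 1 ≠ v by omega)
          omega
  have hinv : σ⁻¹ = τ⁻¹ := by
    ext x
    have hx : 1 ≤ (x : ℕ) + 1 ∧ (x : ℕ) + 1 ≤ k := ⟨by omega, x.isLt⟩
    have h := (key k le_rfl (x + 1) hx.2).1
    rw [sigmaTilde, sigmaTilde, dif_pos hx, dif_pos hx] at h
    simpa using h
  exact inv_injective hinv

end Injectivity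

lemma card_permDegree_eq_le (k d : ℕ) :
    ((Finset.univ : Finset (Equiv.Perm (Fin k))).filter fun σ => permDegree k σ = d).card ≤
      (2 * k) ^ d := by
  have hcard : (Fintype.piFinset fun _ : Fin d =>
      Finset.Icc 1 k ×ˢ (Finset.univ : Finset Bool)).card = (2 * k) ^ d := by
    simp [Fintype.card_piFinset, mul_comm]
  rw [← hcard]
  refine Finset.card_le_card_of_injOn (fun σ i => breakCode k σ i) ?_ ?_
  · intro σ hσ
    have hσ : permDegree k σ = d := by simpa using hσ
    simp only [Finset.mem_coe, Fintype.mem_piFinset, Finset.mem_product, Finset.mem_Icc,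
      Finset.mem_univ, and_true]
    intro i
    exact sigmaTilde_mem_Icc σ⁻¹ (isBreak_nth σ (hσ ▸ i.isLt)).1
  · intro σ hσ τ hτ h
    have hσ : permDegree k σ = d := by simpa using hσ
    have hτ : permDegree k τ = d := by simpa using hτ
    exact eq_of_breakCode_eq (hσ.trans hτ.symm) fun i hi => congrFun h ⟨i, hσ ▸ hi⟩

/-- Quantitative form of the paper's Lemma 7.2: if `2k λ^γ ≤ 1/2` then the sum of
`λ^{γ · deg(σ)}` over all permutations `σ` of `{1,…,k}` with `deg(σ) ≥ D` is at most
`4 (2k λ^γ)^D`. -/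
theorem sum_lambda_pow_degree_le
    (k : ℕ) (hk : 1 ≤ k) (γ lam : ℝ) (hγ : 0 < γ) (hlam : lam ∈ Set.Ioo (0 : ℝ) 1)
    (hsmall : 2 * (k : ℝ) * lam ^ γ ≤ 1 / 2) (D : ℕ) :
    ∑ σ ∈ (Finset.univ : Finset (Equiv.Perm (Fin k))).filter
        (fun σ => D ≤ permDegree k σ),
        lam ^ (γ * (permDegree k σ : ℝ))
      ≤ 4 * (2 * (k : ℝ) * lam ^ γ) ^ D := by
  have hy : 0 < lam ^ γ := Real.rpow_pos_of_pos hlam.1 γ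
  set x : ℝ := 2 * (k : ℝ) * lam ^ γ with hx
  have hx0 : 0 ≤ x := by positivity
  have hmaps : ∀ σ ∈ (Finset.univ : Finset (Equiv.Perm (Fin k))).filter
      (fun σ => D ≤ permDegree k σ), permDegree k σ ∈ Finset.Ico D (k + 1) := by
    intro σ hσ
    have hle : permDegree k σ ≤ k := Nat.sub_le _ _
    exact Finset.mem_Ico.mpr ⟨(Finset.mem_filter.mp hσ).2, by omega⟩
  rw [← Finset.sum_fiberwise_of_maps_to hmaps]
  calc _ ≤ ∑ d ∈ Finset.Ico D (k + 1), x ^ d := by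
        refine Finset.sum_le_sum fun d hd => ?_
        have hcard : ((((Finset.univ : Finset (Equiv.Perm (Fin k))).filter
            (fun σ => D ≤ permDegree k σ)).filter fun σ => permDegree k σ = d).card : ℝ) ≤
            (2 * (k : ℝ)) ^ d := by
          exact_mod_cast (Finset.card_le_card (Finset.filter_subset_filter _
            (Finset.filter_subset _ _))).trans (card_permDegree_eq_le k d)
        rw [Finset.sum_congr rfl (g := fun _ => (lam ^ γ) ^ d), Finset.sum_const, nsmul_eq_mul,
          hx, mul_pow]
        · exact mul_le_mul_of_nonneg_right hcard (by positivity)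
        · intro σ hσ
          rw [(Finset.mem_filter.mp hσ).2, Real.rpow_mul_natCast hlam.1.le]
    _ ≤ x ^ D / (1 - x) := geom_sum_Ico_le_of_lt_one hx0 (by linarith)
    _ ≤ 4 * x ^ D := by
        have hxD : 0 ≤ x ^ D := by positivity
        rw [div_le_iff₀ (by linarith)]
        nlinarith
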